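/- Let m, n be positive integers, let G ∈ ℝ^{m×n} be nonzero, and let U ∈ ℝ^{m×n} have i.i.d. standard Gaussian entries. Then the expected cosine similarity of the noiseless MeZO estimator ⟨G, U⟩_F · U with G satisfies E_U[ |⟨U, G⟩_F| / (‖U‖_F · ‖G‖_F) ] = β_{mn}, where the integrand is defined to be 0 when U = 0. -/

import Mathlib

open MeasureTheory ProbabilityTheory Matrix Real

attribute [local instance] Matrix.frobeniusNormedAddCommGroup Matrix.frobeniusNormedSpace

noncomputable section

/-- Frobenius inner product `⟨X,Y⟩_F = tr(XᵀY)`. -/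
def frobInner {ι κ : Type*} [Fintype ι] [Fintype κ]
    (X Y : Matrix ι κ ℝ) : ℝ := (Xᵀ * Y).trace

/-- The product of standard Gaussian measures over all entries of an `m × n` matrix
(i.i.d. standard Gaussian entries). -/
def gaussMat (m n : ℕ) : Measure (Fin m → Fin n → ℝ) :=
  Measure.pi fun _ => Measure.pi fun _ => gaussianReal 0 1

/-- `β_D = Γ(D/2)/(√π·Γ((D+1)/2))`. -/
def beta (D : ℕ) : ℝ :=
  Real.Gamma (D / 2) / (Real.sqrt π * Real.Gamma ((D + 1) / 2))

/-!
Identify a matrix with its vector of rows, so that `U` becomes a standard Gaussian vector `x` in a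
Euclidean space of dimension `m * n` and the integrand becomes `|cos ∠(g, x)|`. In polar coordinates
the direction and the norm of `x` are uncorrelated, hence `|⟪g, x⟫| = ‖g‖ |cos ∠(g, x)| ‖x‖` gives
`E |⟪g, x⟫| ^ p = ‖g‖ ^ p * E |cos ∠(g, x)| ^ p * E ‖x‖ ^ p`. The left-hand side is a moment of a
one-dimensional Gaussian and the last factor a moment of the norm; both are Gamma integrals.
-/

section Gaussian

open InnerProductGeometry Module Set
open scoped RealInnerProductSpace

variable {E : Type*} [NormedAddCommGroup E] [InnerProductSpace ℝ E] [FiniteDimensional ℝ E]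
  [MeasurableSpace E] [BorelSpace E]

lemma integral_homogeneous_mul_comp_norm {V : Type*} [NormedAddCommGroup V] [NormedSpace ℝ V]
    [FiniteDimensional ℝ V] [Nontrivial V] [MeasurableSpace V] [BorelSpace V]
    (μ : Measure V) [μ.IsAddHaarMeasure] {h : V → ℝ}
    (hh : ∀ c : ℝ, 0 < c → ∀ x, h (c • x) = h x) (f : ℝ → ℝ) :
    ∫ x, h x * f ‖x‖ ∂μ =
      (∫ s, h s ∂μ.toSphere) * ∫ r in Ioi (0 : ℝ), r ^ (finrank ℝ V - 1) * f r := by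
  have h_radial : ∫ r : Ioi (0 : ℝ), f r ∂Measure.volumeIoiPow (finrank ℝ V - 1) =
      ∫ r in Ioi (0 : ℝ), r ^ (finrank ℝ V - 1) * f r := by
    simp only [Measure.volumeIoiPow, ENNReal.ofReal]
    rw [integral_withDensity_eq_integral_smul (by fun_prop),
      ← integral_subtype_comap measurableSet_Ioi fun r ↦ r ^ (finrank ℝ V - 1) * f r]
    refine integral_congr_ae (.of_forall fun r ↦ ?_)
    simp [NNReal.smul_def, (mem_Ioi.1 r.2).le]
  calc
    ∫ x, h x * f ‖x‖ ∂μ = ∫ x : ({0}ᶜ : Set V), h x * f ‖(x : V)‖ ∂μ.comap (↑) := by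
      rw [integral_subtype_comap (measurableSet_singleton _).compl fun x ↦ h x * f ‖x‖,
        restrict_compl_singleton]
    _ = ∫ x, h x.1 * f x.2 ∂μ.toSphere.prod (.volumeIoiPow (finrank ℝ V - 1)) := by
      rw [← μ.measurePreserving_homeomorphUnitSphereProd.integral_comp
        (Homeomorph.measurableEmbedding _)]
      refine integral_congr_ae (.of_forall fun x ↦ ?_)
      simp [hh _ (inv_pos.2 (norm_pos_iff.2 x.2))]
    _ = (∫ s, h s ∂μ.toSphere) * ∫ r : Ioi (0 : ℝ), f r ∂.volumeIoiPow (finrank ℝ V - 1) :=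
      integral_prod_mul (fun s : Metric.sphere (0 : V) 1 ↦ h s) fun r : Ioi (0 : ℝ) ↦ f r
    _ = _ := by rw [h_radial]

variable (E) in
lemma integrable_exp_neg_sq_norm_div_two : Integrable fun x : E ↦ rexp (-‖x‖ ^ 2 / 2) := by
  have h := (GaussianFourier.integrable_cexp_neg_mul_sq_norm_add (V := E) (b := 1 / 2)
    (by norm_num) 0 0).norm
  refine h.congr (.of_forall fun x ↦ ?_)
  simp [Complex.norm_exp, ← Complex.ofReal_pow, div_eq_inv_mul]

variable (E) in
lemma stdGaussian_eq_withDensity :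
    stdGaussian E = volume.withDensity fun x ↦
      ENNReal.ofReal (((2 * π) ^ (finrank ℝ E / 2 : ℝ))⁻¹ * rexp (-‖x‖ ^ 2 / 2)) := by
  have : IsFiniteMeasure ((volume : Measure E).withDensity fun x ↦
      ENNReal.ofReal (((2 * π) ^ (finrank ℝ E / 2 : ℝ))⁻¹ * rexp (-‖x‖ ^ 2 / 2))) :=
    isFiniteMeasure_withDensity_ofReal ((integrable_exp_neg_sq_norm_div_two E).const_mul _).2
  refine Measure.ext_of_charFun (funext fun t ↦ ?_)
  have h := GaussianFourier.integral_cexp_neg_mul_sq_norm_add (V := E) (b := 1 / 2)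
    (by norm_num) Complex.I t
  have h_integrand (x : E) : (ENNReal.ofReal (((2 * π) ^ (finrank ℝ E / 2 : ℝ))⁻¹ *
        rexp (-‖x‖ ^ 2 / 2))).toReal • Complex.exp (⟪x, t⟫ * Complex.I) =
      ((((2 * π) ^ (finrank ℝ E / 2 : ℝ))⁻¹ : ℝ) : ℂ) *
        Complex.exp (-(1 / 2) * ‖x‖ ^ 2 + Complex.I * ⟪t, x⟫) := by
    rw [ENNReal.toReal_ofReal (by positivity), real_inner_comm x t, Complex.real_smul,
      Complex.ofReal_mul, mul_assoc, Complex.ofReal_exp, ← Complex.exp_add]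
    push_cast
    ring_nf
  rw [charFun_stdGaussian, charFun_apply, integral_withDensity_eq_integral_toReal_smul
    (by fun_prop) (.of_forall fun _ ↦ ENNReal.ofReal_lt_top)]
  simp only [h_integrand]
  rw [integral_const_mul, h]
  have h_const : (π / (1 / 2) : ℂ) ^ (finrank ℝ E / 2 : ℂ) =
      ((2 * π) ^ (finrank ℝ E / 2 : ℝ) : ℝ) := by
    rw [Complex.ofReal_cpow (by positivity)]
    push_cast
    ring_nf
  rw [h_const, ← mul_assoc, ← Complex.ofReal_mul, inv_mul_cancel₀ (by positivity),
    Complex.ofReal_one, one_mul, Complex.I_sq]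
  ring_nf

lemma integral_stdGaussian (f : E → ℝ) :
    ∫ x, f x ∂stdGaussian E =
      ((2 * π) ^ (finrank ℝ E / 2 : ℝ))⁻¹ * ∫ x, f x * rexp (-‖x‖ ^ 2 / 2) := by
  rw [stdGaussian_eq_withDensity, integral_withDensity_eq_integral_toReal_smul (by fun_prop)
    (.of_forall fun _ ↦ ENNReal.ofReal_lt_top), ← integral_const_mul]
  refine integral_congr_ae (.of_forall fun x ↦ ?_)
  simp only [smul_eq_mul]
  rw [ENNReal.toReal_ofReal (by positivity)]
  ring

lemma integral_homogeneous_mul_comp_norm_stdGaussian [Nontrivial E] {h : E → ℝ}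
    (hh : ∀ c : ℝ, 0 < c → ∀ x, h (c • x) = h x) (f : ℝ → ℝ) :
    ∫ x, h x * f ‖x‖ ∂stdGaussian E =
      ((2 * π) ^ (finrank ℝ E / 2 : ℝ))⁻¹ *
        (∫ s : Metric.sphere (0 : E) 1, h s ∂volume.toSphere) *
          ∫ r in Ioi (0 : ℝ), r ^ (finrank ℝ E - 1) * (f r * rexp (-r ^ 2 / 2)) := by
  simp only [integral_stdGaussian, mul_assoc]
  rw [integral_homogeneous_mul_comp_norm volume hh fun r ↦ f r * rexp (-r ^ 2 / 2)]

variable (E) in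
lemma integral_comp_norm_stdGaussian [Nontrivial E] (f : ℝ → ℝ) :
    ∫ x, f ‖x‖ ∂stdGaussian E =
      (∫ r in Ioi (0 : ℝ), r ^ (finrank ℝ E - 1) * (f r * rexp (-r ^ 2 / 2))) /
        ∫ r in Ioi (0 : ℝ), r ^ (finrank ℝ E - 1) * rexp (-r ^ 2 / 2) := by
  have polar (f : ℝ → ℝ) :=
    integral_homogeneous_mul_comp_norm_stdGaussian (E := E) (h := 1) (fun _ _ _ ↦ rfl) f
  have h_f := polar f
  have h_total := polar 1
  simp only [Pi.one_apply, mul_one, one_mul, integral_const, probReal_univ, smul_eq_mul]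
    at h_f h_total
  rw [h_f, eq_div_iff (right_ne_zero_of_mul_eq_one h_total.symm), mul_right_comm, ← h_total,
    one_mul]

lemma integral_homogeneous_mul_comp_norm_stdGaussian_eq_mul [Nontrivial E] {h : E → ℝ}
    (hh : ∀ c : ℝ, 0 < c → ∀ x, h (c • x) = h x) (f : ℝ → ℝ) :
    ∫ x, h x * f ‖x‖ ∂stdGaussian E =
      (∫ x, h x ∂stdGaussian E) * ∫ x, f ‖x‖ ∂stdGaussian E := by
  have h_left := integral_homogeneous_mul_comp_norm_stdGaussian hh 1
  have h_total := integral_comp_norm_stdGaussian E 1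
  simp only [Pi.one_apply, mul_one, one_mul, integral_const, probReal_univ, smul_eq_mul]
    at h_left h_total
  have h_radial : ∫ r in Ioi (0 : ℝ), r ^ (finrank ℝ E - 1) * rexp (-r ^ 2 / 2) ≠ 0 :=
    fun h_zero ↦ by simp [h_zero] at h_total
  rw [integral_homogeneous_mul_comp_norm_stdGaussian hh, h_left, integral_comp_norm_stdGaussian,
    mul_assoc (_ * _), mul_div_cancel₀ _ h_radial]

lemma integral_pow_mul_rpow_mul_exp_neg_sq_div_two {n : ℕ} {p : ℝ} (hp : -(n + 1) < p) :
    ∫ r in Ioi (0 : ℝ), r ^ n * (r ^ p * rexp (-r ^ 2 / 2)) =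
      2 ^ ((n + 1 + p) / 2 - 1) * Gamma ((n + 1 + p) / 2) := by
  have h_integrand : ∀ r ∈ Ioi (0 : ℝ), r ^ n * (r ^ p * rexp (-r ^ 2 / 2)) =
      r ^ (n + p) * rexp (-(1 / 2) * r ^ (2 : ℝ)) := fun r hr ↦ by
    rw [rpow_add (mem_Ioi.1 hr), rpow_natCast, rpow_two, mul_assoc]
    ring_nf
  rw [setIntegral_congr_fun measurableSet_Ioi h_integrand,
    integral_rpow_mul_exp_neg_mul_rpow two_pos (by linarith) one_half_pos, one_div,
    inv_rpow two_pos.le, ← rpow_neg two_pos.le, rpow_sub_one two_ne_zero]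
  ring_nf

lemma integral_norm_rpow_stdGaussian [Nontrivial E] {p : ℝ} (hp : -finrank ℝ E < p) :
    ∫ x, ‖x‖ ^ p ∂stdGaussian E =
      2 ^ (p / 2) * Gamma ((finrank ℝ E + p) / 2) / Gamma (finrank ℝ E / 2) := by
  obtain ⟨n, hn⟩ := Nat.exists_eq_succ_of_ne_zero (finrank_pos (R := ℝ) (M := E)).ne'
  rw [hn, Nat.cast_succ] at hp
  have h_mass := integral_pow_mul_rpow_mul_exp_neg_sq_div_two (n := n) (p := 0) (by linarith)
  simp only [rpow_zero, one_mul, add_zero] at h_mass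
  have h_pow : (2 : ℝ) ^ ((n + 1 + p) / 2 - 1) = 2 ^ ((n + 1 : ℝ) / 2 - 1) * 2 ^ (p / 2) := by
    rw [← rpow_add two_pos]
    ring_nf
  rw [integral_comp_norm_stdGaussian E (· ^ p), hn, Nat.succ_sub_one, Nat.cast_succ,
    integral_pow_mul_rpow_mul_exp_neg_sq_div_two hp, h_mass, h_pow, mul_assoc,
    mul_div_mul_left _ _ (by positivity)]

lemma stdGaussian_real : stdGaussian ℝ = gaussianReal 0 1 :=
  Measure.ext_of_charFun <| funext fun t ↦ by
    simp [charFun_stdGaussian, charFun_gaussianReal, neg_div, ← Complex.ofReal_pow]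

lemma integral_abs_rpow_gaussianReal {p : ℝ} (hp : -1 < p) :
    ∫ x, |x| ^ p ∂gaussianReal 0 1 = 2 ^ (p / 2) * Gamma ((1 + p) / 2) / √π := by
  simpa [stdGaussian_real, ← one_div, Gamma_one_half_eq] using
    integral_norm_rpow_stdGaussian (E := ℝ) (by simpa using hp)

lemma map_inner_stdGaussian (g : E) :
    (stdGaussian E).map (fun x ↦ ⟪g, x⟫) = (gaussianReal 0 1).map (‖g‖ * ·) := by
  have h := IsGaussian.map_eq_gaussianReal (μ := stdGaussian E) (innerSL ℝ g)
  rw [integral_strongDual_stdGaussian, variance_dual_stdGaussian, innerSL_apply_norm] at h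
  rw [gaussianReal_map_const_mul, mul_zero, mul_one, ← Real.toNNReal_of_nonneg]
  exact h

lemma integral_abs_inner_rpow_stdGaussian (g : E) {p : ℝ} (hp : -1 < p) :
    ∫ x, |⟪g, x⟫| ^ p ∂stdGaussian E =
      ‖g‖ ^ p * (2 ^ (p / 2) * Gamma ((1 + p) / 2) / √π) := by
  have h_meas (μ : Measure ℝ) : AEStronglyMeasurable (fun y : ℝ ↦ |y| ^ p) μ :=
    (by fun_prop : Measurable fun y : ℝ ↦ |y| ^ p).aestronglyMeasurable
  rw [← integral_map (f := fun y : ℝ ↦ |y| ^ p) (by fun_prop) (h_meas _), map_inner_stdGaussian,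
    integral_map (by fun_prop) (h_meas _), ← integral_abs_rpow_gaussianReal hp,
    ← integral_const_mul]
  simp only [abs_mul, abs_norm, mul_rpow (norm_nonneg g) (abs_nonneg _)]

lemma measurable_cos_angle (g : E) : Measurable fun x ↦ Real.cos (angle g x) := by
  simp only [cos_angle]
  fun_prop

lemma integral_abs_cos_angle_rpow_stdGaussian {g : E} (hg : g ≠ 0) {p : ℝ} (hp : -1 < p) :
    ∫ x, |Real.cos (angle g x)| ^ p ∂stdGaussian E =
      Gamma ((1 + p) / 2) * Gamma (finrank ℝ E / 2) /
        (√π * Gamma ((finrank ℝ E + p) / 2)) := by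
  have : Nontrivial E := nontrivial_of_ne g 0 hg
  have h_finrank : (1 : ℝ) ≤ finrank ℝ E := mod_cast finrank_pos
  have h_norm : ‖g‖ ^ p ≠ 0 := (rpow_pos_of_pos (norm_pos_iff.2 hg) p).ne'
  have h_Gamma : Gamma (finrank ℝ E / 2 : ℝ) ≠ 0 := (Gamma_pos_of_pos (by positivity)).ne'
  have h_Gamma' : Gamma ((finrank ℝ E + p) / 2) ≠ 0 := (Gamma_pos_of_pos (by linarith)).ne'
  have h_scale (c : ℝ) (hc : 0 < c) (x : E) :
      |Real.cos (angle g (c • x))| ^ p = |Real.cos (angle g x)| ^ p := by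
    rw [angle_smul_right_of_pos _ _ hc]
  have h_inner (x : E) : |⟪g, x⟫| ^ p = ‖g‖ ^ p * (|Real.cos (angle g x)| ^ p * ‖x‖ ^ p) := by
    rw [← cos_angle_mul_norm_mul_norm, abs_mul, abs_mul, abs_norm, abs_norm,
      mul_rpow (by positivity) (by positivity), mul_rpow (by positivity) (by positivity)]
    ring
  have h := integral_abs_inner_rpow_stdGaussian g hp
  simp only [h_inner] at h
  rw [integral_const_mul, integral_homogeneous_mul_comp_norm_stdGaussian_eq_mul h_scale (· ^ p),
    integral_norm_rpow_stdGaussian (by linarith)] at h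
  field_simp at h ⊢
  exact h

lemma map_toLp_pi_stdGaussian {ι : Type*} [Fintype ι] {F : ι → Type*}
    [∀ i, NormedAddCommGroup (F i)] [∀ i, InnerProductSpace ℝ (F i)]
    [∀ i, FiniteDimensional ℝ (F i)] [∀ i, MeasurableSpace (F i)] [∀ i, BorelSpace (F i)] :
    (Measure.pi fun i ↦ stdGaussian (F i)).map (WithLp.toLp 2) = stdGaussian (PiLp 2 F) := by
  refine Measure.ext_of_charFun (E := PiLp 2 F) (funext fun t ↦ ?_)
  simp_rw [charFun_stdGaussian, charFun_pi, charFun_stdGaussian, ← Complex.exp_sum,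
    ← Complex.ofReal_pow, PiLp.norm_sq_eq_of_L2]
  simp [Finset.sum_div, neg_div]

end Gaussian

section Matrix

open InnerProductGeometry Module
open scoped RealInnerProductSpace

/-- The tuple of rows of a matrix, as a point of the `ℓ²`-sum of Euclidean spaces: the Hilbert space
in which the Frobenius inner product and norm become the ambient ones. -/
def rowVector {ι κ : Type*} (A : Matrix ι κ ℝ) : PiLp 2 fun _ : ι ↦ EuclideanSpace ℝ κ :=
  WithLp.toLp 2 fun i ↦ WithLp.toLp 2 (A i)

lemma norm_rowVector {ι κ : Type*} [Fintype ι] [Fintype κ] (A : Matrix ι κ ℝ) :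
    ‖rowVector A‖ = ‖A‖ := rfl

lemma inner_rowVector {ι κ : Type*} [Fintype ι] [Fintype κ] (A B : Matrix ι κ ℝ) :
    ⟪rowVector A, rowVector B⟫ = frobInner A B := by
  simp [rowVector, frobInner, PiLp.inner_apply, Matrix.trace, Matrix.mul_apply, mul_comm,
    Finset.sum_comm (s := (Finset.univ : Finset ι))]

-- At a zero matrix both sides are `0`: the angle with `0` is `π / 2`, and `x / 0 = 0`.
lemma cos_angle_rowVector {ι κ : Type*} [Fintype ι] [Fintype κ] (A B : Matrix ι κ ℝ) :
    Real.cos (angle (rowVector A) (rowVector B)) = frobInner A B / (‖A‖ * ‖B‖) := by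
  rw [cos_angle, inner_rowVector, norm_rowVector, norm_rowVector]

lemma finrank_piLp_euclideanSpace (ι κ : Type*) [Fintype ι] [Fintype κ] :
    finrank ℝ (PiLp 2 fun _ : ι ↦ EuclideanSpace ℝ κ) = Fintype.card ι * Fintype.card κ := by
  rw [(WithLp.linearEquiv 2 ℝ (ι → EuclideanSpace ℝ κ)).finrank_eq, finrank_pi_fintype]
  simp

lemma measurable_rowVector_of {ι κ : Type*} [Finite ι] [Finite κ] :
    Measurable fun A : ι → κ → ℝ ↦ rowVector (Matrix.of A) := by
  change Measurable fun A : ι → κ → ℝ ↦ WithLp.toLp 2 fun i ↦ WithLp.toLp 2 (A i)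
  fun_prop

lemma map_rowVector_gaussMat (m n : ℕ) :
    (gaussMat m n).map (fun ω ↦ rowVector (Matrix.of ω)) =
      stdGaussian (PiLp 2 fun _ : Fin m ↦ EuclideanSpace ℝ (Fin n)) := by
  rw [← map_toLp_pi_stdGaussian]
  simp only [← map_pi_eq_stdGaussian]
  rw [← Measure.pi_map_pi (by fun_prop), Measure.map_map (by fun_prop) (by fun_prop)]
  rfl

end Matrix

/-- the expected cosine similarity of the noiseless MeZO estimator
`⟨G,U⟩_F·U` with `G` satisfies `E_U[|⟨U,G⟩_F|/(‖U‖_F‖G‖_F)] = β_{mn}`. -/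
theorem mezo_expected_cosine (m n : ℕ) (hm : 0 < m) (hn : 0 < n)
    (G : Matrix (Fin m) (Fin n) ℝ) (hG : G ≠ 0) :
    (∫ ω, |frobInner (Matrix.of ω) G| / (‖Matrix.of (m := Fin m) (n := Fin n) ω‖ * ‖G‖)
        ∂(gaussMat m n))
      = _root_.beta (m * n) := by
  have hG_row : rowVector G ≠ 0 := by
    rwa [← norm_ne_zero_iff, norm_rowVector, norm_ne_zero_iff]
  have h_cos (ω : Fin m → Fin n → ℝ) :
      |frobInner (Matrix.of ω) G| / (‖Matrix.of (m := Fin m) (n := Fin n) ω‖ * ‖G‖) =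
        |Real.cos (InnerProductGeometry.angle (rowVector G) (rowVector (Matrix.of ω)))| := by
    rw [InnerProductGeometry.angle_comm, cos_angle_rowVector, abs_div, abs_mul, abs_norm, abs_norm]
  have h_moment := integral_abs_cos_angle_rpow_stdGaussian hG_row (p := 1) (by norm_num)
  rw [← map_rowVector_gaussMat, integral_map measurable_rowVector_of.aemeasurable
    ((measurable_cos_angle _).abs.pow_const _).aestronglyMeasurable] at h_moment
  simp only [h_cos]
  simpa [_root_.beta, finrank_piLp_euclideanSpace, add_comm] using h_moment

end
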